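/- Let X and Y be nonempty finite sets, μ, ν strictly positive weight functions, c a cost, ε > 0, φ₁, φ₂ entropy functions satisfying Assumption A, and 𝒥_A, 𝒥_B two partitions of X into nonempty subsets. Suppose Θ is a weight rule which, for every partition 𝒥 ∈ {𝒥_A, 𝒥_B}, assigns to the family of current cell plans (π_J)_{J∈𝒥} and of cell minimizers (π̃_J)_{J∈𝒥} a weight vector (θ_J)_{J∈𝒥} ∈ [0,1]^𝒥, such that: (i) Θ is continuous in its arguments, and (ii) for every plan π with E(π) < ∞, the updated plan π̄ := Σ_J (1−θ_J)π_J + θ_J π̃_J (with π_J := π|_{X_J×Y} and π̃_J := S_J(π) the cell minimizers) satisfies E(π̄) < E(π) unless π_J = π̃_J for all J ∈ 𝒥. Define the parallel iterates (π^k)_k from an initial plan π⁰ with E(π⁰) < ∞ by alternately applying this parallel update with partition 𝒥_A (odd k) and 𝒥_B (even k). Then (π^k)_k converges pointwise to the unique global minimizer of E. -/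

import Mathlib

open Filter Topology
open scoped Classical

noncomputable section

/-- `φ : ℝ → ℝ ∪ {+∞}` is an entropy function: lower semicontinuous, convex,
`dom(φ) ⊆ [0,∞)`, `dom(φ)\{0} ≠ ∅`, never taking the value `-∞`. -/
def IsEntropyFn (φ : ℝ → EReal) : Prop :=
  LowerSemicontinuous φ ∧
  (∀ x y a b : ℝ, 0 ≤ a → 0 ≤ b → a + b = 1 →
      φ (a * x + b * y) ≤ (a : EReal) * φ x + (b : EReal) * φ y) ∧
  (∀ x : ℝ, φ x ≠ ⊥) ∧
  (∀ x : ℝ, φ x < ⊤ → 0 ≤ x) ∧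
  (∃ x : ℝ, x ≠ 0 ∧ φ x < ⊤)

/-- The recession slope `φ'_∞ = lim_{x→∞} φ(x)/x`. -/
def recessionSlope (φ : ℝ → EReal) : EReal :=
  Filter.limsup (fun x : ℝ => φ x * ((x⁻¹ : ℝ) : EReal)) Filter.atTop

/-- The `φ`-divergence on a finite set `Z`:
`D_φ(ρ|σ) = ∑_{z : σ z > 0} σ z · φ(ρ z / σ z) + φ'_∞ · ∑_{z : σ z = 0} ρ z`. -/
def divergence {Z : Type*} [Fintype Z] (φ : ℝ → EReal) (ρ σ : Z → ℝ) : EReal :=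
  (∑ z, if 0 < σ z then (σ z : EReal) * φ (ρ z / σ z) else 0)
    + recessionSlope φ * ((∑ z, if σ z = 0 then ρ z else 0 : ℝ) : EReal)

/-- The convex conjugate `φ*(z) = sup_{x ∈ ℝ} (z·x − φ(x))`. -/
def conjFn (φ : ℝ → EReal) (z : ℝ) : EReal :=
  ⨆ x : ℝ, (((z * x : ℝ) : EReal) - φ x)

/-- Kullback–Leibler divergence on a finite set, with `0·log 0 = 0`:
`KL(ρ|σ) = ∑ z (ρ z log(ρ z/σ z) − ρ z + σ z)` if `ρ ≪ σ`, else `+∞`. -/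
def KLfin {Z : Type*} [Fintype Z] (ρ σ : Z → ℝ) : EReal :=
  if ∀ z, σ z = 0 → ρ z = 0 then
    ((∑ z, (ρ z * Real.log (ρ z / σ z) - ρ z + σ z) : ℝ) : EReal)
  else ⊤

/-- Assumption A: the entropy function `φ` is nonnegative, finite on `[0,∞)`,
and continuously differentiable on the interior `(0,∞)` of its domain. -/
def AssumptionA (φ : ℝ → EReal) : Prop :=
  IsEntropyFn φ ∧ (∀ x : ℝ, 0 ≤ φ x) ∧ (∀ x : ℝ, 0 ≤ x → φ x ≠ ⊤) ∧
  ContDiffOn ℝ 1 (fun s : ℝ => (φ s).toReal) (Set.Ioi (0 : ℝ))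

/-- Primal objective of the unbalanced (cell) problem with `Y`-submarginal `νm`:
`E_J(π|νm) = ⟨c, π⟩ + ε KL(π | μ⊗ν) + D_{φ₁}(P_X π | μ) + D_{φ₂}(P_Y π + νm | ν)`. -/
def EJfun {W Y : Type*} [Fintype W] [Fintype Y]
    (c : W → Y → ℝ) (ε : ℝ) (φ₁ φ₂ : ℝ → EReal)
    (μ : W → ℝ) (ν : Y → ℝ) (νm : Y → ℝ) (π : W → Y → ℝ) : EReal :=
  ((∑ x, ∑ y, c x y * π x y : ℝ) : EReal)
    + (ε : EReal) * KLfin (fun p : W × Y => π p.1 p.2) (fun p : W × Y => μ p.1 * ν p.2)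
    + divergence φ₁ (fun x => ∑ y, π x y) μ
    + divergence φ₂ (fun y => (∑ x, π x y) + νm y) ν

/-- Dual objective of the unbalanced (cell) problem with `Y`-submarginal `νm`. -/
def DJfun {W Y : Type*} [Fintype W] [Fintype Y]
    (c : W → Y → ℝ) (ε : ℝ) (φ₁ φ₂ : ℝ → EReal)
    (μ : W → ℝ) (ν : Y → ℝ) (νm : Y → ℝ) (α : W → ℝ) (β : Y → ℝ) : EReal :=
  ((ε * ∑ x, ∑ y, (1 - Real.exp ((α x + β y - c x y) / ε)) * (μ x * ν y) : ℝ) : EReal)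
    - (∑ x, (μ x : EReal) * conjFn φ₁ (-(α x)))
    - (∑ y, (ν y : EReal) * conjFn φ₂ (-(β y)))
    - ((∑ y, β y * νm y : ℝ) : EReal)

/-- The `Y`-submarginal `ν_{-J}` of the plan `π` outside the cell `J`:
`ν_{-J}(y) = ∑_{x ∉ J} π(x,y)`. -/
def outMarg {X Y : Type*} [Fintype X] (J : Set X) (π : X → Y → ℝ) : Y → ℝ :=
  fun y => ∑ x, (Jᶜ).indicator (fun x' => π x' y) x

/-- The global unbalanced objective
`E(π) = ⟨c, π⟩ + ε KL(π|μ⊗ν) + D_{φ₁}(P_X π|μ) + D_{φ₂}(P_Y π|ν)`. -/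
def Eglobal {X Y : Type*} [Fintype X] [Fintype Y]
    (c : X → Y → ℝ) (ε : ℝ) (φ₁ φ₂ : ℝ → EReal)
    (μ : X → ℝ) (ν : Y → ℝ) (π : X → Y → ℝ) : EReal :=
  EJfun c ε φ₁ φ₂ μ ν (fun _ => 0) π

/-- An indexed family `Js : Fin n → Set X` is a partition of `X` into nonempty
subsets. -/
def IsFinPartition {X : Type*} {n : ℕ} (Js : Fin n → Set X) : Prop :=
  (∀ i, (Js i).Nonempty) ∧ (⋃ i, Js i) = Set.univ ∧
    ∀ i j, i ≠ j → Disjoint (Js i) (Js j)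

/-- `update` implements one cell update: `update J π` agrees with `π` outside
`J × Y` and its restriction to `J × Y` is the (unique) minimizer of the cell
subproblem `E_J(·|ν_{-J})` with `ν_{-J}(y) = ∑_{x ∉ J} π(x,y)`. -/
def IsCellUpdate {X Y : Type*} [Fintype X] [Fintype Y]
    (c : X → Y → ℝ) (ε : ℝ) (φ₁ φ₂ : ℝ → EReal) (μ : X → ℝ) (ν : Y → ℝ)
    (update : Set X → (X → Y → ℝ) → (X → Y → ℝ)) : Prop :=
  ∀ (J : Set X) (π : X → Y → ℝ), (∀ x y, 0 ≤ π x y) →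
    (∀ x y, 0 ≤ update J π x y) ∧
    (∀ x, x ∉ J → ∀ y, update J π x y = π x y) ∧
    ∀ π' : ↥J → Y → ℝ, (∀ (j : J) (y : Y), 0 ≤ π' j y) →
      EJfun (fun (j : J) y => c j y) ε φ₁ φ₂ (fun (j : J) => μ j) ν (outMarg J π)
          (fun (j : J) y => update J π j y)
        ≤ EJfun (fun (j : J) y => c j y) ε φ₁ φ₂ (fun (j : J) => μ j) ν (outMarg J π) π'

/-- One sequential domain decomposition sweep: cycle through the cells of the
partition in their fixed order, updating the current plan after each cell. -/
def sweep {X Y : Type*} (update : Set X → (X → Y → ℝ) → (X → Y → ℝ))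
    {n : ℕ} (Js : Fin n → Set X) (π : X → Y → ℝ) : X → Y → ℝ :=
  (List.ofFn Js).foldl (fun p J => update J p) π

/-- The restriction of a plan to the cell `J × Y`, extended by zero. -/
def cellRestr {X Y : Type*} (J : Set X) (π : X → Y → ℝ) : X → Y → ℝ :=
  fun x y => J.indicator (fun x' => π x' y) x

/-- Convex combination `∑_J (1 − θ_J) π_J + θ_J π̃_J` of cell plans. -/
def combPlan {X Y : Type*} {n : ℕ}
    (πJ tπ : Fin n → X → Y → ℝ) (θ : Fin n → ℝ) : X → Y → ℝ :=
  fun x y => ∑ i, ((1 - θ i) * πJ i x y + θ i * tπ i x y)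

/-- `S i π` is the unique minimizer of the cell subproblem on cell `Js i`
with `Y`-submarginal `ν_{-J}(y) = ∑_{x ∉ Js i} π(x,y)`, extended by zero. -/
def IsSolveMap {X Y : Type*} [Fintype X] [Fintype Y]
    (c : X → Y → ℝ) (ε : ℝ) (φ₁ φ₂ : ℝ → EReal) (μ : X → ℝ) (ν : Y → ℝ)
    {n : ℕ} (Js : Fin n → Set X)
    (S : Fin n → (X → Y → ℝ) → (X → Y → ℝ)) : Prop :=
  ∀ (i : Fin n) (π : X → Y → ℝ), (∀ x y, 0 ≤ π x y) →
    (∀ x y, 0 ≤ S i π x y) ∧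
    (∀ x, x ∉ Js i → ∀ y, S i π x y = 0) ∧
    ∀ π' : ↥(Js i) → Y → ℝ, (∀ (j : Js i) (y : Y), 0 ≤ π' j y) →
      EJfun (fun (j : Js i) y => c j y) ε φ₁ φ₂ (fun (j : Js i) => μ j) ν
          (outMarg (Js i) π) (fun (j : Js i) y => S i π j y)
        ≤ EJfun (fun (j : Js i) y => c j y) ε φ₁ φ₂ (fun (j : Js i) => μ j) ν
          (outMarg (Js i) π) π'

/-- One parallel domain decomposition iteration with weight rule `Θ`: solve all
cell subproblems in parallel and take the convex combination of old and new cell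
plans with weights `Θ((π_J)_J, (π̃_J)_J)`. -/
def parUpdate {X Y : Type*} {n : ℕ} (Js : Fin n → Set X)
    (S : Fin n → (X → Y → ℝ) → (X → Y → ℝ))
    (Θ : (Fin n → X → Y → ℝ) → (Fin n → X → Y → ℝ) → Fin n → ℝ)
    (π : X → Y → ℝ) : X → Y → ℝ :=
  combPlan (fun i => cellRestr (Js i) π) (fun i => S i π)
    (Θ (fun i => cellRestr (Js i) π) (fun i => S i π))

structure GoodFn (f : ℝ → ℝ) : Prop where
  conv : ConvexOn ℝ (Set.Ici 0) f
  cont : ContinuousOn f (Set.Ici 0)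
  diff : ∀ a, 0 < a → DifferentiableAt ℝ f a
  nonneg : ∀ a, 0 ≤ a → 0 ≤ f a

theorem coe_toReal_of_A {φ : ℝ → EReal} (h : AssumptionA φ) {a : ℝ} (ha : 0 ≤ a) :
    φ a = (((φ a).toReal : ℝ) : EReal) :=
  (EReal.coe_toReal (h.2.2.1 a ha) (h.1.2.2.1 a)).symm

theorem good_of_A {φ : ℝ → EReal} (h : AssumptionA φ) : GoodFn (fun s => (φ s).toReal) := by
  have hconv : ConvexOn ℝ (Set.Ici 0) (fun s => (φ s).toReal) := by
    refine ⟨convex_Ici 0, ?_⟩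
    intro x hx y hy a b ha hb hab
    have hx' : (0:ℝ) ≤ x := hx
    have hy' : (0:ℝ) ≤ y := hy
    have h0 := h.1.2.1 x y a b ha hb hab
    rw [coe_toReal_of_A h hx', coe_toReal_of_A h hy',
      coe_toReal_of_A h (show 0 ≤ a * x + b * y by positivity)] at h0
    simp only [smul_eq_mul]
    exact_mod_cast h0
  have hdiff : ∀ a, 0 < a → DifferentiableAt ℝ (fun s => (φ s).toReal) a := by
    intro a ha
    exact ((h.2.2.2.differentiableOn (by norm_num)) a ha).differentiableAt (Ioi_mem_nhds ha)
  refine ⟨hconv, ?_, hdiff, fun a ha => EReal.toReal_nonneg (h.2.1 a)⟩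
  intro a ha
  rcases (Set.mem_Ici.1 ha).eq_or_lt with rfl | ha'
  swap
  · exact (hdiff a ha').continuousAt.continuousWithinAt
  refine tendsto_order.2 ⟨?_, ?_⟩
  · intro b hb
    have hl := h.1.1 0 (b : EReal) (by
      show (b : EReal) < φ 0
      rw [coe_toReal_of_A h le_rfl]; exact_mod_cast hb)
    filter_upwards [mem_nhdsWithin_of_mem_nhds hl, self_mem_nhdsWithin] with x hx hx0
    have hx' : (b : EReal) < φ x := hx
    rw [coe_toReal_of_A h (Set.mem_Ici.1 hx0)] at hx'
    exact_mod_cast hx'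
  · intro b hb
    have hc : Tendsto (fun t : ℝ => (1 - t) * (φ 0).toReal + t * (φ 1).toReal) (𝓝[Set.Ici 0] 0)
        (𝓝 ((1 - 0) * (φ 0).toReal + 0 * (φ 1).toReal)) := by
      apply Tendsto.mono_left _ nhdsWithin_le_nhds
      apply Continuous.tendsto
      fun_prop
    have hb' : (1 - 0) * (φ 0).toReal + 0 * (φ 1).toReal < b := by simpa using hb
    have h1 : ∀ᶠ t : ℝ in 𝓝[Set.Ici 0] 0, t < 1 :=
      mem_nhdsWithin_of_mem_nhds (Iio_mem_nhds one_pos)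
    filter_upwards [hc.eventually (gt_mem_nhds hb'), self_mem_nhdsWithin, h1] with t ht ht0 ht1
    have := hconv.2 (Set.mem_Ici.2 le_rfl) (Set.mem_Ici.2 zero_le_one)
      (show 0 ≤ 1 - t by linarith) (Set.mem_Ici.1 ht0) (by ring)
    simp only [smul_eq_mul, mul_zero, zero_add, mul_one] at this
    linarith

theorem klnn {q p : ℝ} (hq : 0 ≤ q) (hp : 0 < p) :
    0 ≤ q * Real.log q - q * Real.log p - q + p := by
  rcases hq.eq_or_lt with rfl | hq
  · simp [hp.le]
  · have := Real.log_le_sub_one_of_pos (div_pos hp hq)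
    rw [Real.log_div hp.ne' hq.ne'] at this
    have h2 := mul_le_mul_of_nonneg_left this hq.le
    have h3 : q * (p / q - 1) = p - q := by field_simp
    rw [h3] at h2
    linarith

theorem mul_log_div {t m : ℝ} (hm : 0 < m) :
    t * Real.log (t / m) = t * Real.log t - t * Real.log m := by
  by_cases ht : t = 0
  · simp [ht]
  · rw [Real.log_div ht hm.ne']; ring

theorem tangent {f : ℝ → ℝ} (hf : GoodFn f) {a s : ℝ} (ha : 0 < a) (hs : 0 ≤ s) :
    f a + deriv f a * (s - a) ≤ f s := by
  have hd := (hf.diff a ha).hasDerivAt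
  rcases lt_trichotomy a s with h | h | h
  · have := hf.conv.le_slope_of_hasDerivAt (Set.mem_Ici.2 ha.le) (Set.mem_Ici.2 hs) h hd
    rw [slope_def_field, le_div_iff₀ (by linarith)] at this
    linarith
  · subst h; simp
  · have := hf.conv.slope_le_of_hasDerivAt (Set.mem_Ici.2 hs) (Set.mem_Ici.2 ha.le) h hd
    rw [slope_def_field, div_le_iff₀ (by linarith)] at this
    linarith

/-- real functional -/
def Fr {W Y : Type*} [Fintype W] [Fintype Y]
    (c : W → Y → ℝ) (ε : ℝ) (f₁ f₂ : ℝ → ℝ)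
    (μ : W → ℝ) (ν : Y → ℝ) (νm : Y → ℝ) (π : W → Y → ℝ) : ℝ :=
  (∑ x, ∑ y, (c x y * π x y + ε * (π x y * Real.log (π x y / (μ x * ν y)) - π x y + μ x * ν y)))
    + (∑ x, μ x * f₁ ((∑ y, π x y) / μ x))
    + ∑ y, ν y * f₂ (((∑ x, π x y) + νm y) / ν y)

theorem div_coe {Z : Type*} [Fintype Z] {φ : ℝ → EReal} (h : AssumptionA φ) (ρ σ : Z → ℝ)
    (hσ : ∀ z, 0 < σ z) (hρ : ∀ z, 0 ≤ ρ z) :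
    divergence φ ρ σ = ((∑ z, σ z * (φ (ρ z / σ z)).toReal : ℝ) : EReal) := by
  unfold divergence
  have h0 : (∑ z, if σ z = 0 then ρ z else 0 : ℝ) = 0 :=
    Finset.sum_eq_zero fun z _ => by rw [if_neg (hσ z).ne']
  rw [h0, EReal.coe_zero, mul_zero, add_zero]
  have : ∀ s : Finset Z, (∑ z ∈ s, if 0 < σ z then (σ z : EReal) * φ (ρ z / σ z) else 0)
      = ((∑ z ∈ s, σ z * (φ (ρ z / σ z)).toReal : ℝ) : EReal) := by
    intro s
    induction s using Finset.induction_on with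
    | empty => simp
    | insert a s ha ih =>
      rw [Finset.sum_insert ha, Finset.sum_insert ha, ih, if_pos (hσ a),
        coe_toReal_of_A h (div_nonneg (hρ a) (hσ a).le)]
      simp
  exact this _

theorem EJ_coe {W Y : Type*} [Fintype W] [Fintype Y]
    (c : W → Y → ℝ) (ε : ℝ) {φ₁ φ₂ : ℝ → EReal} (h₁ : AssumptionA φ₁) (h₂ : AssumptionA φ₂)
    (μ : W → ℝ) (ν : Y → ℝ) (νm : Y → ℝ) (π : W → Y → ℝ)
    (hμ : ∀ x, 0 < μ x) (hν : ∀ y, 0 < ν y) (hm : ∀ y, 0 ≤ νm y) (hπ : ∀ x y, 0 ≤ π x y) :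
    EJfun c ε φ₁ φ₂ μ ν νm π =
      ((Fr c ε (fun s => (φ₁ s).toReal) (fun s => (φ₂ s).toReal) μ ν νm π : ℝ) : EReal) := by
  unfold EJfun KLfin Fr
  rw [div_coe h₁ _ _ hμ (fun x => Finset.sum_nonneg fun y _ => hπ x y),
    div_coe h₂ _ _ hν (fun y => add_nonneg (Finset.sum_nonneg fun x _ => hπ x y) (hm y)),
    if_pos (fun z hz => absurd hz (mul_pos (hμ _) (hν _)).ne')]
  rw [Fintype.sum_prod_type]
  norm_cast
  rw [Finset.mul_sum, ← Finset.sum_add_distrib]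
  simp only [Finset.mul_sum, ← Finset.sum_add_distrib]

def glue {X Y : Type*} (J : Set X) (π p : X → Y → ℝ) : X → Y → ℝ :=
  fun x y => if x ∈ J then p x y else π x y

theorem F_glue {X Y : Type*} [Fintype X] [Fintype Y]
    (c : X → Y → ℝ) (ε : ℝ) (f₁ f₂ : ℝ → ℝ) (μ : X → ℝ) (ν : Y → ℝ) (J : Set X)
    (π : X → Y → ℝ) : ∃ r : ℝ, ∀ p : X → Y → ℝ,
    Fr c ε f₁ f₂ μ ν (fun _ => 0) (glue J π p) =
      Fr (fun (j : J) y => c j y) ε f₁ f₂ (fun j : J => μ j) ν (outMarg J π)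
        (fun (j : J) y => p j y) + r := by
  refine ⟨(∑ x : {x // x ∉ J}, ∑ y, (c x y * π x y + ε * (π x y * Real.log (π x y / (μ x * ν y)) - π x y + μ x * ν y))) + ∑ x : {x // x ∉ J}, μ x * f₁ ((∑ y, π x y) / μ x), ?_⟩
  intro p
  unfold Fr
  have split : ∀ g : X → ℝ, ∑ x, g x = (∑ x : J, g x) + ∑ x : {x // x ∉ J}, g x := by
    intro g
    rw [← Fintype.sum_subtype_add_sum_subtype (fun x => x ∈ J) g]
  have hin : ∀ (x : J) y, glue J π p x y = p x y := fun x y => by simp [glue]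
  have hout : ∀ (x : {x // x ∉ J}) y, glue J π p x y = π x y := fun x y => by
    simp [glue, x.2]
  have hmarg : ∀ y, ∑ x, glue J π p x y + 0 = ∑ x : J, p x y + outMarg J π y := by
    intro y
    unfold outMarg
    rw [split, split (fun x => (Jᶜ).indicator (fun x' => π x' y) x)]
    simp only [hin, hout]
    have e1 : ∀ x : J, (Jᶜ).indicator (fun x' => π x' y) (x : X) = 0 := fun x => by simp
    have e2 : ∀ x : {x // x ∉ J}, (Jᶜ).indicator (fun x' => π x' y) (x : X) = π x y :=
      fun x => by simp
    simp only [e1, e2]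
    simp
  simp only [hmarg]
  rw [split, split (fun x => μ x * _)]
  simp only [hin, hout]
  ring

def Gf (c ε m t : ℝ) : ℝ := c * t + ε * (t * Real.log t - t * Real.log m - t + m)

theorem Fr_eq {X Y : Type*} [Fintype X] [Fintype Y]
    (c : X → Y → ℝ) (ε : ℝ) (f₁ f₂ : ℝ → ℝ) (μ : X → ℝ) (ν : Y → ℝ)
    (hμ : ∀ x, 0 < μ x) (hν : ∀ y, 0 < ν y) (π : X → Y → ℝ) :
    Fr c ε f₁ f₂ μ ν (fun _ => 0) π = (∑ x, ∑ y, Gf (c x y) ε (μ x * ν y) (π x y))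
    + (∑ x, μ x * f₁ ((∑ y, π x y) / μ x)) + ∑ y, ν y * f₂ ((∑ x, π x y) / ν y) := by
  unfold Fr Gf
  simp only [add_zero, mul_log_div (mul_pos (hμ _) (hν _))]

theorem F_cont {X Y : Type*} [Fintype X] [Fintype Y]
    (c : X → Y → ℝ) (ε : ℝ) {f₁ f₂ : ℝ → ℝ} (h₁ : GoodFn f₁) (h₂ : GoodFn f₂)
    (μ : X → ℝ) (ν : Y → ℝ)
    (hμ : ∀ x, 0 < μ x) (hν : ∀ y, 0 < ν y) :
    ContinuousOn (Fr c ε f₁ f₂ μ ν (fun _ => 0)) {π | ∀ x y, 0 ≤ π x y} := by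
  have : Fr c ε f₁ f₂ μ ν (fun _ => 0) = fun π => _ := funext (Fr_eq c ε f₁ f₂ μ ν hμ hν)
  rw [this]
  refine ContinuousOn.add (ContinuousOn.add ?_ ?_) ?_
  · apply Continuous.continuousOn
    refine continuous_finsetSum _ fun x _ => continuous_finsetSum _ fun y _ => ?_
    unfold Gf
    have h : Continuous fun π : X → Y → ℝ => π x y := by fun_prop
    have h' := Real.continuous_mul_log.comp h
    have h'' : Continuous fun π : X → Y → ℝ => π x y * Real.log (π x y) := h'
    fun_prop
  · refine continuousOn_finsetSum _ fun x _ => ContinuousOn.mul continuousOn_const ?_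
    refine h₁.cont.comp (Continuous.continuousOn (by fun_prop)) ?_
    intro π hπ
    exact div_nonneg (Finset.sum_nonneg fun y _ => hπ x y) (hμ x).le
  · refine continuousOn_finsetSum _ fun y _ => ContinuousOn.mul continuousOn_const ?_
    refine h₂.cont.comp (Continuous.continuousOn (by fun_prop)) ?_
    intro π hπ
    exact div_nonneg (Finset.sum_nonneg fun x _ => hπ x y) (hν y).le

theorem Gf_mid {c ε m s t : ℝ} (hε : 0 < ε) (hs : 0 ≤ s) (ht : 0 ≤ t) (hne : s ≠ t) :
    2 * Gf c ε m ((s + t) / 2) < Gf c ε m s + Gf c ε m t := by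
  have := Real.strictConvexOn_mul_log.2 (Set.mem_Ici.2 hs) (Set.mem_Ici.2 ht) hne
    (show (0:ℝ) < 1/2 by norm_num) (show (0:ℝ) < 1/2 by norm_num) (by norm_num)
  simp only [smul_eq_mul] at this
  rw [show 1 / 2 * s + 1 / 2 * t = (s + t) / 2 by ring] at this
  unfold Gf
  nlinarith [mul_lt_mul_of_pos_left this hε]

theorem f_mid {f : ℝ → ℝ} (hf : GoodFn f) {m a b : ℝ} (hm : 0 < m) (ha : 0 ≤ a) (hb : 0 ≤ b) :
    2 * (m * f (((a + b) / 2) / m)) ≤ m * f (a / m) + m * f (b / m) := by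
  have := hf.conv.2 (Set.mem_Ici.2 (div_nonneg ha hm.le)) (Set.mem_Ici.2 (div_nonneg hb hm.le))
    (show (0:ℝ) ≤ 1/2 by norm_num) (show (0:ℝ) ≤ 1/2 by norm_num) (by norm_num)
  simp only [smul_eq_mul] at this
  rw [show 1 / 2 * (a / m) + 1 / 2 * (b / m) = (a + b) / 2 / m by ring] at this
  nlinarith [mul_le_mul_of_nonneg_left this hm.le]

theorem F_mid {X Y : Type*} [Fintype X] [Fintype Y]
    (c : X → Y → ℝ) {ε : ℝ} (hε : 0 < ε) {f₁ f₂ : ℝ → ℝ} (h₁ : GoodFn f₁) (h₂ : GoodFn f₂)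
    (μ : X → ℝ) (ν : Y → ℝ)
    (hμ : ∀ x, 0 < μ x) (hν : ∀ y, 0 < ν y) (p q : X → Y → ℝ) (hp : ∀ x y, 0 ≤ p x y)
    (hq : ∀ x y, 0 ≤ q x y) (hne : p ≠ q) :
    2 * Fr c ε f₁ f₂ μ ν (fun _ => 0) (fun x y => (p x y + q x y) / 2) <
      Fr c ε f₁ f₂ μ ν (fun _ => 0) p + Fr c ε f₁ f₂ μ ν (fun _ => 0) q := by
  have hle : ∀ x y, 2 * Gf (c x y) ε (μ x * ν y) ((p x y + q x y) / 2) ≤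
      Gf (c x y) ε (μ x * ν y) (p x y) + Gf (c x y) ε (μ x * ν y) (q x y) := by
    intro x y
    by_cases h : p x y = q x y
    · rw [h, show (q x y + q x y) / 2 = q x y by ring]; linarith
    · exact (Gf_mid hε (hp x y) (hq x y) h).le
  obtain ⟨x0, y0, hxy⟩ : ∃ x y, p x y ≠ q x y := by
    by_contra! h
    exact hne (funext fun x => funext fun y => h x y)
  have hs : ∑ x, ∑ y, 2 * Gf (c x y) ε (μ x * ν y) ((p x y + q x y) / 2) <
      ∑ x, ∑ y, (Gf (c x y) ε (μ x * ν y) (p x y) + Gf (c x y) ε (μ x * ν y) (q x y)) :=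
    Finset.sum_lt_sum (fun x _ => Finset.sum_le_sum fun y _ => hle x y)
      ⟨x0, Finset.mem_univ _, Finset.sum_lt_sum (fun y _ => hle x0 y)
        ⟨y0, Finset.mem_univ _, Gf_mid hε (hp x0 y0) (hq x0 y0) hxy⟩⟩
  have hs1 : ∑ x, 2 * (μ x * f₁ ((∑ y, (p x y + q x y) / 2) / μ x)) ≤
      ∑ x, (μ x * f₁ ((∑ y, p x y) / μ x) + μ x * f₁ ((∑ y, q x y) / μ x)) := by
    refine Finset.sum_le_sum fun x _ => ?_
    rw [← Finset.sum_div, Finset.sum_add_distrib]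
    exact f_mid h₁ (hμ x) (Finset.sum_nonneg fun y _ => hp x y)
      (Finset.sum_nonneg fun y _ => hq x y)
  have hs2 : ∑ y, 2 * (ν y * f₂ ((∑ x, (p x y + q x y) / 2) / ν y)) ≤
      ∑ y, (ν y * f₂ ((∑ x, p x y) / ν y) + ν y * f₂ ((∑ x, q x y) / ν y)) := by
    refine Finset.sum_le_sum fun y _ => ?_
    rw [← Finset.sum_div, Finset.sum_add_distrib]
    exact f_mid h₂ (hν y) (Finset.sum_nonneg fun x _ => hp x y)
      (Finset.sum_nonneg fun x _ => hq x y)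
  simp only [Fr_eq c ε f₁ f₂ μ ν hμ hν]
  simp only [← Finset.mul_sum, Finset.sum_add_distrib] at hs hs1 hs2
  linarith

theorem F_coercive {X Y : Type*} [Fintype X] [Fintype Y]
    (c : X → Y → ℝ) {ε : ℝ} (hε : 0 < ε) {f₁ f₂ : ℝ → ℝ} (h₁ : GoodFn f₁) (h₂ : GoodFn f₂)
    (μ : X → ℝ) (ν : Y → ℝ)
    (hμ : ∀ x, 0 < μ x) (hν : ∀ y, 0 < ν y) :
    ∃ D : ℝ, ∀ p : X → Y → ℝ, (∀ x y, 0 ≤ p x y) → ∀ x y,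
      p x y ≤ Fr c ε f₁ f₂ μ ν (fun _ => 0) p + D := by
  let s : X → Y → ℝ := fun x y => (1 - c x y) / ε
  let d : X → Y → ℝ := fun x y => ε * ((μ x * ν y) * (Real.exp (s x y) - 1))
  have hG : ∀ x y t, 0 ≤ t → t ≤ Gf (c x y) ε (μ x * ν y) t + d x y := by
    intro x y t ht
    have hm := mul_pos (hμ x) (hν y)
    have := klnn ht (mul_pos hm (Real.exp_pos (s x y)))
    rw [Real.log_mul hm.ne' (Real.exp_pos _).ne', Real.log_exp] at this
    have h2 := mul_nonneg hε.le this
    have h3 : ε * s x y = 1 - c x y := by simp only [s]; field_simp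
    have h4 : ε * (t * s x y) = t * (1 - c x y) := by rw [← h3]; ring
    simp only [Gf, d]
    linarith
  refine ⟨∑ x, ∑ y, d x y, fun p hp x y => ?_⟩
  rw [Fr_eq c ε f₁ f₂ μ ν hμ hν]
  have e1 : 0 ≤ ∑ x, μ x * f₁ ((∑ y, p x y) / μ x) := Finset.sum_nonneg fun x _ =>
    mul_nonneg (hμ x).le (h₁.nonneg _ (div_nonneg (Finset.sum_nonneg fun y _ => hp x y) (hμ x).le))
  have e2 : 0 ≤ ∑ y, ν y * f₂ ((∑ x, p x y) / ν y) := Finset.sum_nonneg fun y _ =>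
    mul_nonneg (hν y).le (h₂.nonneg _ (div_nonneg (Finset.sum_nonneg fun x _ => hp x y) (hν y).le))
  have e3 : ∑ x, ∑ y, p x y ≤ ∑ x, ∑ y, (Gf (c x y) ε (μ x * ν y) (p x y) + d x y) :=
    Finset.sum_le_sum fun x _ => Finset.sum_le_sum fun y _ => hG x y _ (hp x y)
  have e4 : p x y ≤ ∑ y, p x y :=
    Finset.single_le_sum (f := fun y => p x y) (fun y _ => hp x y) (Finset.mem_univ y)
  have e5 : ∑ y, p x y ≤ ∑ x, ∑ y, p x y :=
    Finset.single_le_sum (f := fun x => ∑ y, p x y)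
      (fun x _ => Finset.sum_nonneg fun y _ => hp x y) (Finset.mem_univ x)
  simp only [Finset.sum_add_distrib] at e3
  linarith

def bump {X Y : Type*} (π : X → Y → ℝ) (x : X) (y : Y) (t : ℝ) : X → Y → ℝ :=
  fun x' y' => π x' y' + if x' = x then (if y' = y then t else 0) else 0

theorem F_bump {X Y : Type*} [Fintype X] [Fintype Y]
    (c : X → Y → ℝ) (ε : ℝ) (f₁ f₂ : ℝ → ℝ) (μ : X → ℝ) (ν : Y → ℝ)
    (hμ : ∀ x, 0 < μ x) (hν : ∀ y, 0 < ν y) (π : X → Y → ℝ) (x : X) (y : Y) : ∃ r, ∀ t,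
    Fr c ε f₁ f₂ μ ν (fun _ => 0) (bump π x y t) = Gf (c x y) ε (μ x * ν y) (π x y + t)
      + μ x * f₁ ((∑ y, π x y + t) / μ x) + ν y * f₂ ((∑ x, π x y + t) / ν y) + r := by
  refine ⟨Fr c ε f₁ f₂ μ ν (fun _ => 0) π - (Gf (c x y) ε (μ x * ν y) (π x y)
      + μ x * f₁ ((∑ y, π x y) / μ x) + ν y * f₂ ((∑ x, π x y) / ν y)), fun t => ?_⟩
  rw [Fr_eq c ε f₁ f₂ μ ν hμ hν, Fr_eq c ε f₁ f₂ μ ν hμ hν]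
  have k1 : ∀ x', ∑ y', bump π x y t x' y' = ∑ y', π x' y' + if x' = x then t else 0 := by
    intro x'
    simp only [bump, Finset.sum_add_distrib]
    split_ifs <;> simp
  have k2 : ∀ y', ∑ x', bump π x y t x' y' = ∑ x', π x' y' + if y' = y then t else 0 := by
    intro y'
    simp only [bump, Finset.sum_add_distrib]
    simp
  simp only [k1, k2]
  have a1 : ∑ x', μ x' * f₁ ((∑ y', π x' y' + if x' = x then t else 0) / μ x')
      - ∑ x', μ x' * f₁ ((∑ y', π x' y') / μ x') = μ x * f₁ ((∑ y, π x y + t) / μ x) -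
        μ x * f₁ ((∑ y, π x y) / μ x) := by
    rw [← Finset.sum_sub_distrib, Finset.sum_eq_single x]
    · simp
    · intro b _ hb; simp [hb]
    · simp
  have a2 : ∑ y', ν y' * f₂ ((∑ x', π x' y' + if y' = y then t else 0) / ν y')
      - ∑ y', ν y' * f₂ ((∑ x', π x' y') / ν y') = ν y * f₂ ((∑ x, π x y + t) / ν y) -
        ν y * f₂ ((∑ x, π x y) / ν y) := by
    rw [← Finset.sum_sub_distrib, Finset.sum_eq_single y]
    · simp
    · intro b _ hb; simp [hb]
    · simp
  have a3 : ∑ x', ∑ y', Gf (c x' y') ε (μ x' * ν y') (bump π x y t x' y') -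
      ∑ x', ∑ y', Gf (c x' y') ε (μ x' * ν y') (π x' y') =
      Gf (c x y) ε (μ x * ν y) (π x y + t) - Gf (c x y) ε (μ x * ν y) (π x y) := by
    rw [← Finset.sum_sub_distrib, Finset.sum_eq_single x]
    · rw [← Finset.sum_sub_distrib, Finset.sum_eq_single y]
      · simp [bump]
      · intro b _ hb; simp [hb, bump]
      · simp
    · intro b _ hb; simp [hb, bump]
    · simp
  linarith

theorem f_inc {f : ℝ → ℝ} (hf : GoodFn f) {m a t : ℝ} (hm : 0 < m) (ha : 0 ≤ a) (ht : 0 ≤ t)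
    (htm : t ≤ m) :
    m * f ((a + t) / m) ≤ m * f (a / m) + t * (f (a / m + 1) - f (a / m)) := by
  have h0 := div_nonneg ha hm.le
  have h1 : t / m ≤ 1 := (div_le_one hm).2 htm
  have := hf.conv.2 (Set.mem_Ici.2 h0) (Set.mem_Ici.2 (show 0 ≤ a / m + 1 by linarith))
    (show 0 ≤ 1 - t / m by linarith) (div_nonneg ht hm.le) (by ring)
  simp only [smul_eq_mul] at this
  rw [show (1 - t / m) * (a / m) + t / m * (a / m + 1) = (a + t) / m by ring] at this
  have h2 := mul_le_mul_of_nonneg_left this hm.le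
  have h3 : m * ((1 - t / m) * f (a / m) + t / m * f (a / m + 1)) =
    m * f (a / m) + t * (f (a / m + 1) - f (a / m)) := by field_simp; ring
  linarith

theorem F_opt {X Y : Type*} [Fintype X] [Fintype Y]
    (c : X → Y → ℝ) {ε : ℝ} (hε : 0 < ε) {f₁ f₂ : ℝ → ℝ} (h₁ : GoodFn f₁) (h₂ : GoodFn f₂)
    (μ : X → ℝ) (ν : Y → ℝ)
    (hμ : ∀ x, 0 < μ x) (hν : ∀ y, 0 < ν y) (π : X → Y → ℝ) (hπ : ∀ x y, 0 ≤ π x y)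
    (hmin : ∀ x y t, 0 ≤ π x y + t → Fr c ε f₁ f₂ μ ν (fun _ => 0) π ≤
      Fr c ε f₁ f₂ μ ν (fun _ => 0) (bump π x y t))
    (q : X → Y → ℝ) (hq : ∀ x y, 0 ≤ q x y) :
    Fr c ε f₁ f₂ μ ν (fun _ => 0) π ≤ Fr c ε f₁ f₂ μ ν (fun _ => 0) q := by
  have hb0 : ∀ x y, bump π x y 0 = π := by
    intro x y; funext x' y'; simp [bump]
  have hpos : ∀ x y, 0 < π x y := by
    intro x y
    rcases (hπ x y).eq_or_lt with h | h
    swap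
    · exact h
    exfalso
    obtain ⟨r, hr⟩ := F_bump c ε f₁ f₂ μ ν hμ hν π x y
    have hm := mul_pos (hμ x) (hν y)
    have ha : 0 ≤ ∑ y, π x y := Finset.sum_nonneg fun y _ => hπ x y
    have hb : 0 ≤ ∑ x, π x y := Finset.sum_nonneg fun x _ => hπ x y
    set a := ∑ y, π x y
    set b := ∑ x, π x y
    set C := c x y - ε * Real.log (μ x * ν y) - ε + (f₁ (a / μ x + 1) - f₁ (a / μ x))
      + (f₂ (b / ν y + 1) - f₂ (b / ν y)) with hC
    set t := min (min (μ x) (ν y)) (Real.exp (-(C + 1) / ε)) with ht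
    have ht0 : 0 < t := lt_min (lt_min (hμ x) (hν y)) (Real.exp_pos _)
    have key := hmin x y t (by linarith)
    have e0 := hr 0
    rw [hb0] at e0
    rw [e0, hr t, ← h] at key
    have i1 := f_inc h₁ (hμ x) ha ht0.le ((min_le_left _ _).trans (min_le_left _ _))
    have i2 := f_inc h₂ (hν y) hb ht0.le ((min_le_left _ _).trans (min_le_right _ _))
    have hl : Real.log t ≤ -(C + 1) / ε := by
      rw [← Real.log_exp (-(C + 1) / ε)]
      exact Real.log_le_log ht0 (min_le_right _ _)
    rw [le_div_iff₀ hε] at hl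
    simp only [Gf, add_zero, zero_add, mul_zero, zero_mul, sub_zero] at key
    have h5 : 0 ≤ t * (C + ε * Real.log t) := by
      rw [hC]
      linarith
    have h6 : t * (C + ε * Real.log t) ≤ t * (-1) :=
      mul_le_mul_of_nonneg_left (by linarith) ht0.le
    linarith
  have hzero : ∀ x y, c x y + ε * (Real.log (π x y) - Real.log (μ x * ν y))
      + deriv f₁ ((∑ y, π x y) / μ x) + deriv f₂ ((∑ x, π x y) / ν y) = 0 := by
    intro x y
    obtain ⟨r, hr⟩ := F_bump c ε f₁ f₂ μ ν hμ hν π x y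
    have ha : 0 < ∑ y, π x y := Finset.sum_pos (fun y _ => hpos x y) ⟨y, Finset.mem_univ _⟩
    have hb : 0 < ∑ x, π x y := Finset.sum_pos (fun x _ => hpos x y) ⟨x, Finset.mem_univ _⟩
    set a := ∑ y, π x y
    set b := ∑ x, π x y
    have hloc : IsLocalMin (fun t => Fr c ε f₁ f₂ μ ν (fun _ => 0) (bump π x y t)) 0 := by
      have : ∀ᶠ t : ℝ in 𝓝 0, -π x y < t := lt_mem_nhds (by linarith [hpos x y])
      filter_upwards [this] with t ht
      rw [hb0]
      exact hmin x y t (by linarith)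
    have hid : ∀ k : ℝ, HasDerivAt (fun t : ℝ => k + t) 1 0 := fun k =>
      (hasDerivAt_id (0:ℝ)).const_add k
    have d1 : HasDerivAt (fun t => μ x * f₁ ((a + t) / μ x)) (μ x * (deriv f₁ (a / μ x) * (1 / μ x))) 0 := by
      have hd := (h₁.diff (a / μ x) (div_pos ha (hμ x))).hasDerivAt
      have := HasDerivAt.comp (0:ℝ) (h₂ := f₁) (h₂' := deriv f₁ (a / μ x)) (h := fun t => (a + t) / μ x)
        (by simpa only [add_zero] using hd) ((hid a).div_const (μ x))
      exact this.const_mul (μ x)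
    have d2 : HasDerivAt (fun t => ν y * f₂ ((b + t) / ν y)) (ν y * (deriv f₂ (b / ν y) * (1 / ν y))) 0 := by
      have hd := (h₂.diff (b / ν y) (div_pos hb (hν y))).hasDerivAt
      have := HasDerivAt.comp (0:ℝ) (h₂ := f₂) (h₂' := deriv f₂ (b / ν y)) (h := fun t => (b + t) / ν y)
        (by simpa only [add_zero] using hd) ((hid b).div_const (ν y))
      exact this.const_mul (ν y)
    have d3 : HasDerivAt (fun t => Gf (c x y) ε (μ x * ν y) (π x y + t))
        ((c x y * 1 + ε * (((Real.log (π x y) + 1) * 1) - 1 * Real.log (μ x * ν y) - 1))) 0 := by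
      unfold Gf
      have hl := Real.hasDerivAt_mul_log (hpos x y).ne'
      have := HasDerivAt.comp (0:ℝ) (h₂ := fun s => s * Real.log s) (h := fun t => π x y + t)
        (by simpa using hl) (hid (π x y))
      exact ((hid _).const_mul _).add
        ((((this.sub ((hid _).mul_const _)).sub (hid _)).add_const _).const_mul ε)
    have dd := (((d3.add d1).add d2).add_const r)
    have : (fun t => Fr c ε f₁ f₂ μ ν (fun _ => 0) (bump π x y t)) = _ := funext hr
    rw [this] at hloc
    have h0 := hloc.hasDerivAt_eq_zero dd
    have hm1 := (hμ x).ne'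
    have hm2 := (hν y).ne'
    rw [← h0]
    field_simp
    ring
  have t1 : ∀ x y, Gf (c x y) ε (μ x * ν y) (π x y) + (c x y + ε * (Real.log (π x y) - Real.log (μ x * ν y))) * (q x y - π x y) ≤ Gf (c x y) ε (μ x * ν y) (q x y) := by
    intro x y
    have := mul_nonneg hε.le (klnn (hq x y) (hpos x y))
    unfold Gf
    linarith
  have ten : ∀ (f : ℝ → ℝ) (hf : GoodFn f) (m a s : ℝ), 0 < m → 0 < a → 0 ≤ s →
      m * f (a / m) + deriv f (a / m) * (s - a) ≤ m * f (s / m) := by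
    intro f hf m a s hm ha hs
    have := mul_le_mul_of_nonneg_left (tangent hf (div_pos ha hm) (div_nonneg hs hm.le)) hm.le
    have e : m * (f (a / m) + deriv f (a / m) * (s / m - a / m)) =
      m * f (a / m) + deriv f (a / m) * (s - a) := by field_simp
    linarith
  rw [Fr_eq c ε f₁ f₂ μ ν hμ hν, Fr_eq c ε f₁ f₂ μ ν hμ hν]
  rcases isEmpty_or_nonempty X with hX | hX
  · simp
  rcases isEmpty_or_nonempty Y with hY | hY
  · simp
  have s1 := Finset.sum_le_sum fun x (_ : x ∈ Finset.univ) =>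
    Finset.sum_le_sum fun y (_ : y ∈ Finset.univ) => t1 x y
  have s2 := Finset.sum_le_sum fun x (_ : x ∈ Finset.univ) =>
    ten f₁ h₁ (μ x) (∑ y, π x y) (∑ y, q x y) (hμ x)
      (Finset.sum_pos (fun y _ => hpos x y) Finset.univ_nonempty)
      (Finset.sum_nonneg fun y _ => hq x y)
  have s3 := Finset.sum_le_sum fun y (_ : y ∈ Finset.univ) =>
    ten f₂ h₂ (ν y) (∑ x, π x y) (∑ x, q x y) (hν y)
      (Finset.sum_pos (fun x _ => hpos x y) Finset.univ_nonempty)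
      (Finset.sum_nonneg fun x _ => hq x y)
  have tot : ∑ x, ∑ y, (c x y + ε * (Real.log (π x y) - Real.log (μ x * ν y))) * (q x y - π x y)
     + ∑ x, deriv f₁ ((∑ y, π x y) / μ x) * (∑ y, q x y - ∑ y, π x y)
     + ∑ y, deriv f₂ ((∑ x, π x y) / ν y) * (∑ x, q x y - ∑ x, π x y) = 0 := by
    have r1 : ∑ y, deriv f₂ ((∑ x, π x y) / ν y) * (∑ x, q x y - ∑ x, π x y) =
        ∑ x, ∑ y, deriv f₂ ((∑ x, π x y) / ν y) * (q x y - π x y) := by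
      rw [Finset.sum_comm]
      refine Finset.sum_congr rfl fun y _ => ?_
      rw [← Finset.sum_sub_distrib, Finset.mul_sum]
    have r2 : ∑ x, deriv f₁ ((∑ y, π x y) / μ x) * (∑ y, q x y - ∑ y, π x y) =
        ∑ x, ∑ y, deriv f₁ ((∑ y, π x y) / μ x) * (q x y - π x y) := by
      refine Finset.sum_congr rfl fun x _ => ?_
      rw [← Finset.sum_sub_distrib, Finset.mul_sum]
    rw [r1, r2, ← Finset.sum_add_distrib, ← Finset.sum_add_distrib]
    refine Finset.sum_eq_zero fun x _ => ?_
    rw [← Finset.sum_add_distrib, ← Finset.sum_add_distrib]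
    refine Finset.sum_eq_zero fun y _ => ?_
    rw [← add_mul, ← add_mul, hzero, zero_mul]
  simp only [Finset.sum_add_distrib] at s1 s2 s3
  linarith

section Par

variable {X Y : Type*} [Fintype X] [Fintype Y]
  {c : X → Y → ℝ} {ε : ℝ} {φ₁ φ₂ : ℝ → EReal} {μ : X → ℝ} {ν : Y → ℝ}

/-- real version of the global objective -/
def FG (c : X → Y → ℝ) (ε : ℝ) (φ₁ φ₂ : ℝ → EReal) (μ : X → ℝ) (ν : Y → ℝ)
    (π : X → Y → ℝ) : ℝ :=
  Fr c ε (fun s => (φ₁ s).toReal) (fun s => (φ₂ s).toReal) μ ν (fun _ => 0) π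

theorem Eglobal_coe (h₁ : AssumptionA φ₁) (h₂ : AssumptionA φ₂)
    (hμ : ∀ x, 0 < μ x) (hν : ∀ y, 0 < ν y) (π : X → Y → ℝ) (hπ : ∀ x y, 0 ≤ π x y) :
    Eglobal c ε φ₁ φ₂ μ ν π = ((FG c ε φ₁ φ₂ μ ν π : ℝ) : EReal) :=
  EJ_coe c ε h₁ h₂ μ ν _ π hμ hν (fun _ => le_rfl) hπ

theorem glue_nonneg {J : Set X} {π p : X → Y → ℝ} (hπ : ∀ x y, 0 ≤ π x y)
    (hp : ∀ x y, 0 ≤ p x y) : ∀ x y, 0 ≤ glue J π p x y := by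
  intro x y
  unfold glue
  split_ifs
  exacts [hp x y, hπ x y]

theorem glue_self (J : Set X) (π : X → Y → ℝ) : glue J π π = π := by
  funext x y; simp [glue]

theorem solve_glue (h₁ : AssumptionA φ₁) (h₂ : AssumptionA φ₂)
    (hμ : ∀ x, 0 < μ x) (hν : ∀ y, 0 < ν y) {n : ℕ} {Js : Fin n → Set X}
    {S : Fin n → (X → Y → ℝ) → (X → Y → ℝ)} (hS : IsSolveMap c ε φ₁ φ₂ μ ν Js S)
    (i : Fin n) (π : X → Y → ℝ) (hπ : ∀ x y, 0 ≤ π x y) (p : X → Y → ℝ)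
    (hp : ∀ x y, 0 ≤ p x y) :
    FG c ε φ₁ φ₂ μ ν (glue (Js i) π (S i π)) ≤ FG c ε φ₁ φ₂ μ ν (glue (Js i) π p) := by
  obtain ⟨r, hr⟩ := F_glue c ε (fun s => (φ₁ s).toReal) (fun s => (φ₂ s).toReal) μ ν (Js i) π
  have hh := hS i π hπ
  have h := hh.2.2 (fun j y => p j y) (fun j y => hp j y)
  have hm : ∀ y, 0 ≤ outMarg (Js i) π y := fun y => Finset.sum_nonneg fun x _ =>
    Set.indicator_nonneg (fun x' _ => hπ x' y) x
  rw [EJ_coe _ ε h₁ h₂ (fun j : Js i => μ j) ν _ (fun (j : Js i) y => S i π j y)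
      (fun j => hμ j) hν hm (fun j y => hh.1 j y),
    EJ_coe _ ε h₁ h₂ (fun j : Js i => μ j) ν _ (fun (j : Js i) y => p j y)
      (fun j => hμ j) hν hm (fun j y => hp j y)] at h
  have h' := EReal.coe_le_coe_iff.1 h
  unfold FG
  rw [hr, hr]
  linarith

theorem solve_uniq (hε : 0 < ε) (h₁ : AssumptionA φ₁) (h₂ : AssumptionA φ₂)
    (hμ : ∀ x, 0 < μ x) (hν : ∀ y, 0 < ν y) {n : ℕ} {Js : Fin n → Set X}
    {S : Fin n → (X → Y → ℝ) → (X → Y → ℝ)} (hS : IsSolveMap c ε φ₁ φ₂ μ ν Js S)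
    (i : Fin n) (π : X → Y → ℝ) (hπ : ∀ x y, 0 ≤ π x y) (s : X → Y → ℝ)
    (hs : ∀ x y, 0 ≤ s x y) (hs0 : ∀ x, x ∉ Js i → ∀ y, s x y = 0)
    (hmin : FG c ε φ₁ φ₂ μ ν (glue (Js i) π s) ≤ FG c ε φ₁ φ₂ μ ν (glue (Js i) π (S i π))) :
    s = S i π := by
  obtain ⟨hn, h0, -⟩ := hS i π hπ
  have heq : glue (Js i) π s = glue (Js i) π (S i π) := by
    by_contra hne
    have hm := F_mid c hε (good_of_A h₁) (good_of_A h₂) μ ν hμ hν _ _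
      (glue_nonneg hπ hs) (glue_nonneg hπ hn) hne
    have hg : (fun x y => (glue (Js i) π s x y + glue (Js i) π (S i π) x y) / 2) =
        glue (Js i) π (fun x y => (s x y + S i π x y) / 2) := by
      funext x y
      unfold glue
      split_ifs
      · rfl
      · ring
    rw [hg] at hm
    have := solve_glue h₁ h₂ hμ hν hS i π hπ (fun x y => (s x y + S i π x y) / 2)
      (fun x y => by have := hs x y; have := hn x y; positivity)
    unfold FG at *
    linarith
  funext x y
  by_cases hx : x ∈ Js i
  · have := congrFun (congrFun heq x) y
    simpa [glue, hx] using this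
  · rw [hs0 x hx, h0 x hx]

theorem FG_uniq (hε : 0 < ε) (h₁ : AssumptionA φ₁) (h₂ : AssumptionA φ₂)
    (hμ : ∀ x, 0 < μ x) (hν : ∀ y, 0 < ν y) (p q : X → Y → ℝ) (hp : ∀ x y, 0 ≤ p x y)
    (hq : ∀ x y, 0 ≤ q x y)
    (hmin : ∀ r : X → Y → ℝ, (∀ x y, 0 ≤ r x y) → FG c ε φ₁ φ₂ μ ν p ≤ FG c ε φ₁ φ₂ μ ν r)
    (hle : FG c ε φ₁ φ₂ μ ν q ≤ FG c ε φ₁ φ₂ μ ν p) : q = p := by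
  by_contra hne
  have hm := F_mid c hε (good_of_A h₁) (good_of_A h₂) μ ν hμ hν q p hq hp hne
  have := hmin (fun x y => (q x y + p x y) / 2)
    (fun x y => by have := hp x y; have := hq x y; positivity)
  unfold FG at *
  linarith

theorem fixed_opt (hε : 0 < ε) (h₁ : AssumptionA φ₁) (h₂ : AssumptionA φ₂)
    (hμ : ∀ x, 0 < μ x) (hν : ∀ y, 0 < ν y) {n : ℕ} {Js : Fin n → Set X}
    (hJ : IsFinPartition Js)
    {S : Fin n → (X → Y → ℝ) → (X → Y → ℝ)} (hS : IsSolveMap c ε φ₁ φ₂ μ ν Js S)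
    (π : X → Y → ℝ) (hπ : ∀ x y, 0 ≤ π x y) (hfix : ∀ i, S i π = cellRestr (Js i) π)
    (q : X → Y → ℝ) (hq : ∀ x y, 0 ≤ q x y) :
    FG c ε φ₁ φ₂ μ ν π ≤ FG c ε φ₁ φ₂ μ ν q := by
  refine F_opt c hε (good_of_A h₁) (good_of_A h₂) μ ν hμ hν π hπ ?_ q hq
  intro x y t ht
  have hx : x ∈ ⋃ i, Js i := by rw [hJ.2.1]; trivial
  obtain ⟨i, hi⟩ := Set.mem_iUnion.1 hx
  have hb : ∀ x' y', 0 ≤ bump π x y t x' y' := by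
    intro x' y'
    unfold bump
    split_ifs with e1 e2
    · subst e1; subst e2; exact ht
    · simpa using hπ x' y'
    · simpa using hπ x' y'
  have := solve_glue h₁ h₂ hμ hν hS i π hπ (bump π x y t) hb
  have e1 : glue (Js i) π (S i π) = π := by
    rw [hfix]
    funext x' y'
    by_cases h : x' ∈ Js i <;> simp [glue, cellRestr, h]
  have e2 : glue (Js i) π (bump π x y t) = bump π x y t := by
    funext x' y'
    by_cases h : x' ∈ Js i
    · simp [glue, h]
    · have : x' ≠ x := fun e => h (e ▸ hi)
      simp [glue, h, bump, this]
  rw [e1, e2] at this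
  exact this

theorem par_nonneg {n : ℕ} {Js : Fin n → Set X}
    {S : Fin n → (X → Y → ℝ) → (X → Y → ℝ)} (hS : IsSolveMap c ε φ₁ φ₂ μ ν Js S)
    {Θ : (Fin n → X → Y → ℝ) → (Fin n → X → Y → ℝ) → Fin n → ℝ}
    (h01 : ∀ πJ tπ i, Θ πJ tπ i ∈ Set.Icc (0 : ℝ) 1)
    (π : X → Y → ℝ) (hπ : ∀ x y, 0 ≤ π x y) : ∀ x y, 0 ≤ parUpdate Js S Θ π x y := by
  intro x y
  unfold parUpdate combPlan
  refine Finset.sum_nonneg fun i _ => ?_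
  refine add_nonneg (mul_nonneg ?_ ?_) (mul_nonneg ?_ ?_)
  · linarith [(h01 (fun i => cellRestr (Js i) π) (fun i => S i π) i).2]
  · exact Set.indicator_nonneg (fun x' _ => hπ x' y) x
  · exact (h01 _ _ i).1
  · exact (hS i π hπ).1 x y

theorem par_fixed {n : ℕ} {Js : Fin n → Set X} (hJ : IsFinPartition Js)
    {S : Fin n → (X → Y → ℝ) → (X → Y → ℝ)}
    (Θ : (Fin n → X → Y → ℝ) → (Fin n → X → Y → ℝ) → Fin n → ℝ)
    (π : X → Y → ℝ) (hfix : ∀ i, S i π = cellRestr (Js i) π) : parUpdate Js S Θ π = π := by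
  funext x y
  unfold parUpdate combPlan
  have hx : x ∈ ⋃ i, Js i := by rw [hJ.2.1]; trivial
  obtain ⟨i, hi⟩ := Set.mem_iUnion.1 hx
  simp only [hfix]
  rw [Finset.sum_eq_single i]
  · simp only [cellRestr, Set.indicator_of_mem hi]; ring
  · intro j _ hj
    have : x ∉ Js j := fun h => Set.disjoint_left.1 (hJ.2.2 j i hj) h hi
    simp [cellRestr, this]
  · simp

theorem par_le (h₁ : AssumptionA φ₁) (h₂ : AssumptionA φ₂)
    (hμ : ∀ x, 0 < μ x) (hν : ∀ y, 0 < ν y) {n : ℕ} {Js : Fin n → Set X}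
    (hJ : IsFinPartition Js)
    {S : Fin n → (X → Y → ℝ) → (X → Y → ℝ)} (hS : IsSolveMap c ε φ₁ φ₂ μ ν Js S)
    {Θ : (Fin n → X → Y → ℝ) → (Fin n → X → Y → ℝ) → Fin n → ℝ}
    (h01 : ∀ πJ tπ i, Θ πJ tπ i ∈ Set.Icc (0 : ℝ) 1)
    (hdec : ∀ π : X → Y → ℝ, (∀ x y, 0 ≤ π x y) →
      Eglobal c ε φ₁ φ₂ μ ν π ≠ ⊤ →
      (∃ i, S i π ≠ cellRestr (Js i) π) →
      Eglobal c ε φ₁ φ₂ μ ν (parUpdate Js S Θ π) < Eglobal c ε φ₁ φ₂ μ ν π)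
    (π : X → Y → ℝ) (hπ : ∀ x y, 0 ≤ π x y) :
    (∀ i, S i π = cellRestr (Js i) π) ∨
      FG c ε φ₁ φ₂ μ ν (parUpdate Js S Θ π) < FG c ε φ₁ φ₂ μ ν π := by
  by_cases h : ∀ i, S i π = cellRestr (Js i) π
  · exact Or.inl h
  · right
    push Not at h
    have := hdec π hπ (by rw [Eglobal_coe h₁ h₂ hμ hν π hπ]; exact EReal.coe_ne_top _) h
    rw [Eglobal_coe h₁ h₂ hμ hν π hπ, Eglobal_coe h₁ h₂ hμ hν _ (par_nonneg hS h01 π hπ)] at this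
    exact_mod_cast this

theorem ultra_lim {D : ℝ} (U : Ultrafilter ℕ) (u : ℕ → X → Y → ℝ)
    (hu : ∀ n x y, 0 ≤ u n x y) (hD : ∀ n x y, u n x y ≤ D) :
    ∃ p : X → Y → ℝ, (∀ x y, 0 ≤ p x y) ∧ Tendsto u U (𝓝 p) := by
  have hc : IsCompact (Set.Icc (fun _ _ => 0 : X → Y → ℝ) (fun _ _ => D)) := isCompact_Icc
  obtain ⟨p, hp, hl⟩ := hc.ultrafilter_le_nhds' (U.map u)
    (Filter.mem_map.2 (Filter.univ_mem' fun n => ⟨fun x y => hu n x y, fun x y => hD n x y⟩))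
  exact ⟨p, fun x y => hp.1 x y, hl⟩

theorem FG_tendsto (h₁ : AssumptionA φ₁) (h₂ : AssumptionA φ₂)
    (hμ : ∀ x, 0 < μ x) (hν : ∀ y, 0 < ν y) {l : Filter ℕ} {u : ℕ → X → Y → ℝ}
    {p : X → Y → ℝ} (hu : ∀ n x y, 0 ≤ u n x y) (hp : ∀ x y, 0 ≤ p x y)
    (h : Tendsto u l (𝓝 p)) :
    Tendsto (fun n => FG c ε φ₁ φ₂ μ ν (u n)) l (𝓝 (FG c ε φ₁ φ₂ μ ν p)) := by
  have := F_cont c ε (good_of_A h₁) (good_of_A h₂) μ ν hμ hν p hp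
  exact this.tendsto.comp (tendsto_nhdsWithin_iff.2 ⟨h, Eventually.of_forall hu⟩)

theorem glue_tendsto {l : Filter ℕ} {u s : ℕ → X → Y → ℝ} {p q : X → Y → ℝ} (J : Set X)
    (h : Tendsto u l (𝓝 p)) (h' : Tendsto s l (𝓝 q)) :
    Tendsto (fun n => glue J (u n) (s n)) l (𝓝 (glue J p q)) := by
  refine tendsto_pi_nhds.2 fun x => tendsto_pi_nhds.2 fun y => ?_
  have a := tendsto_pi_nhds.1 (tendsto_pi_nhds.1 h x) y
  have b := tendsto_pi_nhds.1 (tendsto_pi_nhds.1 h' x) y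
  by_cases hx : x ∈ J
  · simpa [glue, hx] using b
  · simpa [glue, hx] using a

theorem par_cont (hε : 0 < ε) (h₁ : AssumptionA φ₁) (h₂ : AssumptionA φ₂)
    (hμ : ∀ x, 0 < μ x) (hν : ∀ y, 0 < ν y) {n : ℕ} {Js : Fin n → Set X}
    {S : Fin n → (X → Y → ℝ) → (X → Y → ℝ)} (hS : IsSolveMap c ε φ₁ φ₂ μ ν Js S)
    {Θ : (Fin n → X → Y → ℝ) → (Fin n → X → Y → ℝ) → Fin n → ℝ}
    (hcont : Continuous fun p : (Fin n → X → Y → ℝ) × (Fin n → X → Y → ℝ) => Θ p.1 p.2)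
    (U : Ultrafilter ℕ) (u : ℕ → X → Y → ℝ)
    (hu : ∀ n x y, 0 ≤ u n x y) (M : ℝ) (hM : ∀ n, FG c ε φ₁ φ₂ μ ν (u n) ≤ M)
    (p : X → Y → ℝ) (hp : ∀ x y, 0 ≤ p x y) (hup : Tendsto u U (𝓝 p)) :
    Tendsto (fun n => parUpdate Js S Θ (u n)) U (𝓝 (parUpdate Js S Θ p)) := by
  obtain ⟨D, hD⟩ := F_coercive c hε (good_of_A h₁) (good_of_A h₂) μ ν hμ hν
  have hSt : ∀ i, Tendsto (fun n => S i (u n)) U (𝓝 (S i p)) := by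
    intro i
    have hn : ∀ n x y, 0 ≤ S i (u n) x y := fun n => (hS i (u n) (hu n)).1
    have hbd : ∀ n x y, S i (u n) x y ≤ M + D := by
      intro n x y
      have e1 := hD _ (glue_nonneg (J := Js i) (hu n) (hn n)) x y
      have e2 := solve_glue h₁ h₂ hμ hν hS i (u n) (hu n) (u n) (hu n)
      rw [glue_self] at e2
      have e3 := hM n
      have e4 := glue_nonneg (J := Js i) (hu n) (hn n) x y
      have e5 : S i (u n) x y ≤ glue (Js i) (u n) (S i (u n)) x y := by
        by_cases hx : x ∈ Js i
        · simp [glue, hx]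
        · rw [(hS i (u n) (hu n)).2.1 x hx]; exact e4
      unfold FG at *
      linarith
    obtain ⟨s, hs, hlim⟩ := ultra_lim U (fun n => S i (u n)) hn hbd
    have : s = S i p := by
      refine solve_uniq hε h₁ h₂ hμ hν hS i p hp s hs ?_ ?_
      · intro x hx y
        have a := tendsto_pi_nhds.1 (tendsto_pi_nhds.1 hlim x) y
        have b : (fun n => S i (u n) x y) = fun _ => 0 :=
          funext fun n => (hS i (u n) (hu n)).2.1 x hx y
        rw [b] at a
        exact tendsto_nhds_unique a tendsto_const_nhds
      · have hsp := (hS i p hp).1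
        refine le_of_tendsto_of_tendsto'
          (FG_tendsto h₁ h₂ hμ hν (fun n => glue_nonneg (hu n) (hn n)) (glue_nonneg hp hs)
            (glue_tendsto (Js i) hup hlim))
          (FG_tendsto h₁ h₂ hμ hν (fun n => glue_nonneg (hu n) hsp) (glue_nonneg hp hsp)
            (glue_tendsto (Js i) hup tendsto_const_nhds)) ?_
        intro n
        exact solve_glue h₁ h₂ hμ hν hS i (u n) (hu n) _ hsp
    rw [← this]
    exact hlim
  have hR : ∀ i, Tendsto (fun n => cellRestr (Js i) (u n)) U (𝓝 (cellRestr (Js i) p)) := by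
    intro i
    refine tendsto_pi_nhds.2 fun x => tendsto_pi_nhds.2 fun y => ?_
    have a := tendsto_pi_nhds.1 (tendsto_pi_nhds.1 hup x) y
    by_cases hx : x ∈ Js i
    · simpa [cellRestr, hx] using a
    · simp [cellRestr, hx]
  have hT := (hcont.tendsto (fun i => cellRestr (Js i) p, fun i => S i p)).comp
    ((tendsto_pi_nhds.2 hR).prodMk_nhds (tendsto_pi_nhds.2 hSt))
  refine tendsto_pi_nhds.2 fun x => tendsto_pi_nhds.2 fun y => ?_
  unfold parUpdate combPlan
  refine tendsto_finsetSum _ fun i _ => ?_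
  have t1 := tendsto_pi_nhds.1 hT i
  have t2 := tendsto_pi_nhds.1 (tendsto_pi_nhds.1 (hR i) x) y
  have t3 := tendsto_pi_nhds.1 (tendsto_pi_nhds.1 (hSt i) x) y
  exact ((tendsto_const_nhds.sub t1).mul t2).add (t1.mul t3)

end Par

/-- parallel domain decomposition with a continuous weight rule
that strictly decreases the score on every non-fixed point converges pointwise
to the unique global minimizer of `E`. -/
theorem parallel_domdec_converges_continuous_rule
    {X Y : Type*} [Fintype X] [Fintype Y] [Nonempty X] [Nonempty Y]
    (μ : X → ℝ) (ν : Y → ℝ) (hμ : ∀ x, 0 < μ x) (hν : ∀ y, 0 < ν y)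
    (c : X → Y → ℝ) (ε : ℝ) (hε : 0 < ε)
    (φ₁ φ₂ : ℝ → EReal) (h₁ : AssumptionA φ₁) (h₂ : AssumptionA φ₂)
    {nA nB : ℕ} (JA : Fin nA → Set X) (JB : Fin nB → Set X)
    (hJA : IsFinPartition JA) (hJB : IsFinPartition JB)
    (SA : Fin nA → (X → Y → ℝ) → (X → Y → ℝ))
    (SB : Fin nB → (X → Y → ℝ) → (X → Y → ℝ))
    (hSA : IsSolveMap c ε φ₁ φ₂ μ ν JA SA)
    (hSB : IsSolveMap c ε φ₁ φ₂ μ ν JB SB)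
    (ΘA : (Fin nA → X → Y → ℝ) → (Fin nA → X → Y → ℝ) → Fin nA → ℝ)
    (ΘB : (Fin nB → X → Y → ℝ) → (Fin nB → X → Y → ℝ) → Fin nB → ℝ)
    -- the weight rules take values in [0,1]
    (hΘA01 : ∀ πJ tπ i, ΘA πJ tπ i ∈ Set.Icc (0 : ℝ) 1)
    (hΘB01 : ∀ πJ tπ i, ΘB πJ tπ i ∈ Set.Icc (0 : ℝ) 1)
    -- (i) continuity of the weight rules
    (hΘAcont : Continuous fun p : (Fin nA → X → Y → ℝ) × (Fin nA → X → Y → ℝ) =>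
      ΘA p.1 p.2)
    (hΘBcont : Continuous fun p : (Fin nB → X → Y → ℝ) × (Fin nB → X → Y → ℝ) =>
      ΘB p.1 p.2)
    -- (ii) strict decrement unless all cell plans are already optimal
    (hΘAdec : ∀ π : X → Y → ℝ, (∀ x y, 0 ≤ π x y) →
      Eglobal c ε φ₁ φ₂ μ ν π ≠ ⊤ →
      (∃ i, SA i π ≠ cellRestr (JA i) π) →
      Eglobal c ε φ₁ φ₂ μ ν (parUpdate JA SA ΘA π) < Eglobal c ε φ₁ φ₂ μ ν π)
    (hΘBdec : ∀ π : X → Y → ℝ, (∀ x y, 0 ≤ π x y) →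
      Eglobal c ε φ₁ φ₂ μ ν π ≠ ⊤ →
      (∃ i, SB i π ≠ cellRestr (JB i) π) →
      Eglobal c ε φ₁ φ₂ μ ν (parUpdate JB SB ΘB π) < Eglobal c ε φ₁ φ₂ μ ν π)
    (π0 : X → Y → ℝ) (hπ0 : ∀ x y, 0 ≤ π0 x y)
    (hfin : Eglobal c ε φ₁ φ₂ μ ν π0 ≠ ⊤)
    (iter : ℕ → X → Y → ℝ) (hiter0 : iter 0 = π0)
    (hiterS : ∀ k : ℕ, iter (k + 1) =
      if (k + 1) % 2 = 1 then parUpdate JA SA ΘA (iter k)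
      else parUpdate JB SB ΘB (iter k)) :
    ∃ πopt : X → Y → ℝ, (∀ x y, 0 ≤ πopt x y) ∧
      (∀ π' : X → Y → ℝ, (∀ x y, 0 ≤ π' x y) →
          Eglobal c ε φ₁ φ₂ μ ν πopt ≤ Eglobal c ε φ₁ φ₂ μ ν π') ∧
      (∀ π' : X → Y → ℝ, (∀ x y, 0 ≤ π' x y) →
          (∀ π'' : X → Y → ℝ, (∀ x y, 0 ≤ π'' x y) →
            Eglobal c ε φ₁ φ₂ μ ν π' ≤ Eglobal c ε φ₁ φ₂ μ ν π'') →
          π' = πopt) ∧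
      ∀ x y, Filter.Tendsto (fun k => iter k x y) Filter.atTop (nhds (πopt x y)) := by
  obtain ⟨D, hD⟩ := F_coercive c hε (good_of_A h₁) (good_of_A h₂) μ ν hμ hν
  have hnn : ∀ k x y, 0 ≤ iter k x y := by
    intro k
    induction k with
    | zero => rw [hiter0]; exact hπ0
    | succ k ih =>
      rw [hiterS]
      split_ifs
      · exact par_nonneg hSA hΘA01 _ ih
      · exact par_nonneg hSB hΘB01 _ ih
  have hdecr : ∀ k, FG c ε φ₁ φ₂ μ ν (iter (k + 1)) ≤ FG c ε φ₁ φ₂ μ ν (iter k) := by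
    intro k
    rw [hiterS]
    split_ifs
    · rcases par_le h₁ h₂ hμ hν hJA hSA hΘA01 hΘAdec (iter k) (hnn k) with h | h
      · rw [par_fixed hJA ΘA _ h]
      · exact h.le
    · rcases par_le h₁ h₂ hμ hν hJB hSB hΘB01 hΘBdec (iter k) (hnn k) with h | h
      · rw [par_fixed hJB ΘB _ h]
      · exact h.le
  have hanti : Antitone fun k => FG c ε φ₁ φ₂ μ ν (iter k) := antitone_nat_of_succ_le hdecr
  have hM : ∀ k, FG c ε φ₁ φ₂ μ ν (iter k) ≤ FG c ε φ₁ φ₂ μ ν (iter 0) :=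
    fun k => hanti (Nat.zero_le k)
  have hbd : ∀ k x y, iter k x y ≤ FG c ε φ₁ φ₂ μ ν (iter 0) + D := by
    intro k x y
    have a := hD (iter k) (hnn k) x y
    have b := hM k
    unfold FG at *
    linarith
  obtain ⟨L, hL⟩ : ∃ L, Tendsto (fun k => FG c ε φ₁ φ₂ μ ν (iter k)) atTop (𝓝 L) := by
    refine ⟨_, tendsto_atTop_ciInf hanti ⟨-D, ?_⟩⟩
    rintro _ ⟨k, rfl⟩
    have x := Classical.arbitrary X
    have y := Classical.arbitrary Y
    have a := hD (iter k) (hnn k) x y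
    have b := hnn k x y
    simp only [FG]
    linarith
  -- a cluster point of the even iterates
  have hU : ((Ultrafilter.of (atTop : Filter ℕ)) : Filter ℕ) ≤ atTop := Ultrafilter.of_le _
  obtain ⟨p, hp, hlim⟩ := ultra_lim (Ultrafilter.of (atTop : Filter ℕ)) (fun k => iter (2 * k))
    (fun k => hnn _) (fun k => hbd _)
  have h2 : Tendsto (fun k : ℕ => 2 * k) atTop atTop :=
    tendsto_atTop_mono (fun k => by simp only [id]; omega) tendsto_id
  have h3 : Tendsto (fun k : ℕ => 2 * k + 1) atTop atTop :=
    tendsto_atTop_mono (fun k => by simp only [id]; omega) tendsto_id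
  have hFp : FG c ε φ₁ φ₂ μ ν p = L :=
    tendsto_nhds_unique (FG_tendsto h₁ h₂ hμ hν (fun k => hnn (2 * k)) hp hlim)
      ((hL.comp h2).mono_left hU)
  have hTlim := par_cont hε h₁ h₂ hμ hν hSA hΘAcont _ (fun k => iter (2 * k))
    (fun k => hnn _) _ (fun k => hM _) p hp hlim
  have hodd : ∀ k, parUpdate JA SA ΘA (iter (2 * k)) = iter (2 * k + 1) := by
    intro k
    rw [hiterS, if_pos (by omega)]
  simp only [hodd] at hTlim
  have hFT : FG c ε φ₁ φ₂ μ ν (parUpdate JA SA ΘA p) = L :=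
    tendsto_nhds_unique (FG_tendsto h₁ h₂ hμ hν (fun k => hnn (2 * k + 1))
      (par_nonneg hSA hΘA01 p hp) hTlim) ((hL.comp h3).mono_left hU)
  have hfix : ∀ i, SA i p = cellRestr (JA i) p := by
    rcases par_le h₁ h₂ hμ hν hJA hSA hΘA01 hΘAdec p hp with h | h
    · exact h
    · linarith
  have hopt := fixed_opt hε h₁ h₂ hμ hν hJA hSA p hp hfix
  refine ⟨p, hp, ?_, ?_, ?_⟩
  · intro q hq
    rw [Eglobal_coe h₁ h₂ hμ hν p hp, Eglobal_coe h₁ h₂ hμ hν q hq]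
    exact_mod_cast hopt q hq
  · intro q hq hqm
    have := hqm p hp
    rw [Eglobal_coe h₁ h₂ hμ hν p hp, Eglobal_coe h₁ h₂ hμ hν q hq] at this
    exact FG_uniq hε h₁ h₂ hμ hν p q hp hq hopt (by exact_mod_cast this)
  · have hconv : Tendsto iter atTop (𝓝 p) := by
      refine tendsto_iff_ultrafilter _ _ _ |>.2 fun U hU => ?_
      obtain ⟨q, hq, hql⟩ := ultra_lim U iter hnn hbd
      have hFq : FG c ε φ₁ φ₂ μ ν q = L :=
        tendsto_nhds_unique (FG_tendsto h₁ h₂ hμ hν hnn hq hql) (hL.mono_left hU)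
      have : q = p := FG_uniq hε h₁ h₂ hμ hν p q hp hq hopt (by rw [hFq, hFp])
      rw [← this]
      exact hql
    intro x y
    exact tendsto_pi_nhds.1 (tendsto_pi_nhds.1 hconv x) y

end
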